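/- arXiv:0810.3451 — 3 statements merged into one kernel-verified Lean document; each statement's English description precedes it below -/
import Mathlib

section
/- Let M = (X, A, P, R, γ) and M̄ = (X, A, P̄, R̄, γ) be two finite MDPs over the same state set X, action set A and discount factor γ ∈ [0,1), differing only in their transition and reward functions, and suppose the rewards of M satisfy 0 ≤ R(x,a,y) ≤ R⁰ for all (x,a,y). Let ε > 0 and set ε' := (1−γ)² ε / ( |X| (1 − γ + R⁰) ). If |P(x,a,y) R(x,a,y) − P̄(x,a,y) R̄(x,a,y)| ≤ ε' and |P(x,a,y) − P̄(x,a,y)| ≤ ε' for all (x,a,y) ∈ X × A × X, then for every stationary policy π and every (x,a) ∈ X × A, |Q^π_M(x,a) − Q^π_M̄(x,a)| ≤ ε. -/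
/-!
In terms of the expected rewards `r` the Bellman operator is `T Q = r + γ P V`, where `V` averages
`Q` over the policy, and it is a `γ`-contraction in the sup norm. A fixed point `Q'` of a
contraction `T'` satisfies `‖Q - Q'‖ ≤ ‖Q - T' Q‖ / (1 - γ)` for every `Q`. With `T' = T` and the
zero function this gives `‖r‖ / (1 - γ)` as a bound for the fixed point of `T`; with `T'` the second
operator and `Q = T Q`, the numerator is `‖T Q - T' Q‖`, which only involves the differences of the
rewards and of the transitions.
-/

section SupNorm

variable {ι X A : Type*} [Fintype ι] [Fintype X] [Fintype A]

theorem abs_sum_mul_le_sum_abs_mul_norm (w g : ι → ℝ) :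
    |∑ i, w i * g i| ≤ (∑ i, |w i|) * ‖g‖ := by
  rw [Finset.sum_mul]
  refine (Finset.abs_sum_le_sum_abs _ _).trans (Finset.sum_le_sum fun i _ => ?_)
  rw [abs_mul]
  exact mul_le_mul_of_nonneg_left (norm_le_pi_norm g i) (abs_nonneg _)

theorem abs_sum_mul_le_norm_of_sum_abs_le_one {w : ι → ℝ} (hw : ∑ i, |w i| ≤ 1) (g : ι → ℝ) :
    |∑ i, w i * g i| ≤ ‖g‖ :=
  (abs_sum_mul_le_sum_abs_mul_norm w g).trans (mul_le_of_le_one_left (norm_nonneg g) hw)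

theorem sum_abs_le_one_of_mem_stdSimplex {w : ι → ℝ} (hw : w ∈ stdSimplex ℝ ι) :
    ∑ i, |w i| ≤ 1 := by
  simp only [abs_of_nonneg (hw.1 _), hw.2, le_refl]

theorem sum_abs_le_card_mul {g : ι → ℝ} {c : ℝ} (hg : ∀ i, |g i| ≤ c) :
    ∑ i, |g i| ≤ Fintype.card ι * c := by
  simpa only [nsmul_eq_mul, Finset.card_univ] using
    Finset.sum_le_card_nsmul Finset.univ _ c fun i _ => hg i

theorem norm_le_of_forall_abs_le [Nonempty X] [Nonempty A] {f : X → A → ℝ} {c : ℝ}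
    (hf : ∀ x a, |f x a| ≤ c) : ‖f‖ ≤ c :=
  (pi_norm_le_iff_of_nonempty f).2 fun x => (pi_norm_le_iff_of_nonempty (f x)).2 (hf x)

theorem abs_apply_le_norm (f : X → A → ℝ) (x : X) (a : A) : |f x a| ≤ ‖f‖ :=
  (norm_le_pi_norm (f x) a).trans (norm_le_pi_norm f x)

end SupNorm

section Bellman

open scoped NNReal

open Function (IsFixedPt)

variable {X A : Type*} [Fintype A]

/-- The state value function obtained by averaging an action value function `Q` over the actions
chosen by the policy `π`. -/
def policyValue (π Q : X → A → ℝ) (y : X) : ℝ :=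
  ∑ b, π y b * Q y b

theorem policyValue_sub (π Q Q' : X → A → ℝ) :
    policyValue π (Q - Q') = policyValue π Q - policyValue π Q' := by
  ext y
  simp only [policyValue, Pi.sub_apply, mul_sub, Finset.sum_sub_distrib]

variable [Fintype X]

/-- The mean one-step reward `r(x, a) = ∑ y, P(x, a, y) R(x, a, y)`, through which alone the rewards
enter the Bellman equations. -/
def expectedReward (P R : X → A → X → ℝ) (x : X) (a : A) : ℝ :=
  ∑ y, P x a y * R x a y

/-- The Bellman operator of the policy `π` for discount factor `γ`, expected rewards `r` and
transitions `P`; its fixed point is the value function `Q^π`. -/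
def bellmanOperator (γ : ℝ≥0) (r : X → A → ℝ) (P : X → A → X → ℝ) (π Q : X → A → ℝ)
    (x : X) (a : A) : ℝ :=
  r x a + γ * ∑ y, P x a y * policyValue π Q y

variable {γ : ℝ≥0} {r r' π Q Q' : X → A → ℝ} {P P' R R' : X → A → X → ℝ}

theorem isFixedPt_bellmanOperator_of_bellman_equation
    (hQ : ∀ x a, Q x a = ∑ y, P x a y * (R x a y + γ * ∑ b, π y b * Q y b)) :
    IsFixedPt (bellmanOperator γ (expectedReward P R) P π) Q := by
  ext x a
  rw [hQ x a, bellmanOperator, expectedReward, Finset.mul_sum, ← Finset.sum_add_distrib]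
  exact Finset.sum_congr rfl fun y _ => by rw [policyValue]; ring

theorem norm_policyValue_le (hπ : ∀ y, ∑ b, |π y b| ≤ 1) (Q : X → A → ℝ) :
    ‖policyValue π Q‖ ≤ ‖Q‖ :=
  (pi_norm_le_iff_of_nonneg (norm_nonneg Q)).2 fun y =>
    (abs_sum_mul_le_norm_of_sum_abs_le_one (hπ y) (Q y)).trans (norm_le_pi_norm Q y)

theorem bellmanOperator_zero (γ : ℝ≥0) (r : X → A → ℝ) (P : X → A → X → ℝ) (π : X → A → ℝ) :
    bellmanOperator γ r P π 0 = r := by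
  ext x a
  simp [bellmanOperator, policyValue]

theorem lipschitzWith_bellmanOperator (γ : ℝ≥0) (r : X → A → ℝ)
    (hP : ∀ x a, ∑ y, |P x a y| ≤ 1) (hπ : ∀ y, ∑ b, |π y b| ≤ 1) :
    LipschitzWith γ (bellmanOperator γ r P π) := by
  refine LipschitzWith.of_dist_le_mul fun Q Q' => ?_
  have hbound : 0 ≤ (γ : ℝ) * dist Q Q' := by positivity
  refine (dist_pi_le_iff hbound).2 fun x => (dist_pi_le_iff hbound).2 fun a => ?_
  have hdiff : bellmanOperator γ r P π Q x a - bellmanOperator γ r P π Q' x a =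
      γ * ∑ y, P x a y * policyValue π (Q - Q') y := by
    simp only [bellmanOperator, policyValue_sub, Pi.sub_apply, mul_sub, Finset.sum_sub_distrib]
    ring
  rw [Real.dist_eq, hdiff, abs_mul, NNReal.abs_eq, dist_eq_norm]
  gcongr
  exact (abs_sum_mul_le_norm_of_sum_abs_le_one (hP x a) _).trans (norm_policyValue_le hπ _)

theorem contractingWith_bellmanOperator (hγ : γ < 1) (r : X → A → ℝ)
    (hP : ∀ x a, ∑ y, |P x a y| ≤ 1) (hπ : ∀ y, ∑ b, |π y b| ≤ 1) :
    ContractingWith γ (bellmanOperator γ r P π) :=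
  ⟨hγ, lipschitzWith_bellmanOperator γ r hP hπ⟩

theorem norm_le_of_isFixedPt_bellmanOperator (hγ : γ < 1) (hP : ∀ x a, ∑ y, |P x a y| ≤ 1)
    (hπ : ∀ y, ∑ b, |π y b| ≤ 1) (hQ : IsFixedPt (bellmanOperator γ r P π) Q) :
    ‖Q‖ ≤ ‖r‖ / (1 - γ) := by
  simpa only [bellmanOperator_zero, dist_zero_left] using
    (contractingWith_bellmanOperator hγ r hP hπ).dist_le_of_fixedPoint 0 hQ

theorem norm_bellmanOperator_sub_le [Nonempty X] [Nonempty A] {η : ℝ} (γ : ℝ≥0) (r r' : X → A → ℝ)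
    (hη : ∀ x a, ∑ y, |P x a y - P' x a y| ≤ η) (hπ : ∀ y, ∑ b, |π y b| ≤ 1) (Q : X → A → ℝ) :
    ‖bellmanOperator γ r P π Q - bellmanOperator γ r' P' π Q‖ ≤ ‖r - r'‖ + γ * (η * ‖Q‖) := by
  refine norm_le_of_forall_abs_le fun x a => ?_
  have hdiff : (bellmanOperator γ r P π Q - bellmanOperator γ r' P' π Q) x a =
      (r - r') x a + γ * ∑ y, (P x a y - P' x a y) * policyValue π Q y := by
    simp only [bellmanOperator, Pi.sub_apply, sub_mul, Finset.sum_sub_distrib]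
    ring
  have hη0 : 0 ≤ η := (Finset.sum_nonneg fun _ _ => abs_nonneg _).trans (hη x a)
  have htransition : |∑ y, (P x a y - P' x a y) * policyValue π Q y| ≤ η * ‖Q‖ :=
    (abs_sum_mul_le_sum_abs_mul_norm _ _).trans
      (mul_le_mul (hη x a) (norm_policyValue_le hπ Q) (norm_nonneg _) hη0)
  rw [hdiff]
  refine (abs_add_le _ _).trans (add_le_add (abs_apply_le_norm _ x a) ?_)
  rw [abs_mul, NNReal.abs_eq]
  gcongr

theorem norm_sub_le_of_isFixedPt_bellmanOperator [Nonempty X] [Nonempty A] {η : ℝ} (hγ : γ < 1)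
    (hP : ∀ x a, ∑ y, |P x a y| ≤ 1) (hP' : ∀ x a, ∑ y, |P' x a y| ≤ 1)
    (hη : ∀ x a, ∑ y, |P x a y - P' x a y| ≤ η) (hπ : ∀ y, ∑ b, |π y b| ≤ 1)
    (hQ : IsFixedPt (bellmanOperator γ r P π) Q)
    (hQ' : IsFixedPt (bellmanOperator γ r' P' π) Q') :
    ‖Q - Q'‖ ≤ (‖r - r'‖ + γ * (η * (‖r‖ / (1 - γ)))) / (1 - γ) := by
  have hη0 : 0 ≤ η := (Finset.sum_nonneg fun _ _ => abs_nonneg _).trans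
    (hη (Classical.arbitrary X) (Classical.arbitrary A))
  have hγ' : (0 : ℝ) ≤ 1 - γ := sub_nonneg.2 hγ.le
  calc ‖Q - Q'‖ ≤ ‖Q - bellmanOperator γ r' P' π Q‖ / (1 - γ) := by
        simpa only [dist_eq_norm] using
          (contractingWith_bellmanOperator hγ r' hP' hπ).dist_le_of_fixedPoint Q hQ'
    _ = ‖bellmanOperator γ r P π Q - bellmanOperator γ r' P' π Q‖ / (1 - γ) := by rw [hQ.eq]
    _ ≤ (‖r - r'‖ + γ * (η * ‖Q‖)) / (1 - γ) := by
        gcongr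
        exact norm_bellmanOperator_sub_le γ r r' hη hπ Q
    _ ≤ (‖r - r'‖ + γ * (η * (‖r‖ / (1 - γ)))) / (1 - γ) := by
        gcongr
        exact norm_le_of_isFixedPt_bellmanOperator hγ hP hπ hQ

theorem norm_expectedReward_sub_le [Nonempty X] [Nonempty A] {δ : ℝ}
    (hδ : ∀ x a y, |P x a y * R x a y - P' x a y * R' x a y| ≤ δ) :
    ‖expectedReward P R - expectedReward P' R'‖ ≤ Fintype.card X * δ := by
  refine norm_le_of_forall_abs_le fun x a => ?_
  rw [Pi.sub_apply, Pi.sub_apply, expectedReward, expectedReward, ← Finset.sum_sub_distrib]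
  exact (Finset.abs_sum_le_sum_abs _ _).trans (sum_abs_le_card_mul (hδ x a))

theorem norm_sub_le_of_entrywise_close [Nonempty X] [Nonempty A] {δ R₀ : ℝ} (hγ : γ < 1)
    (hP : ∀ x a, ∑ y, |P x a y| ≤ 1) (hP' : ∀ x a, ∑ y, |P' x a y| ≤ 1)
    (hπ : ∀ y, ∑ b, |π y b| ≤ 1) (hR : ‖expectedReward P R‖ ≤ R₀)
    (hPR : ∀ x a y, |P x a y * R x a y - P' x a y * R' x a y| ≤ δ)
    (hPP' : ∀ x a y, |P x a y - P' x a y| ≤ δ)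
    (hQ : IsFixedPt (bellmanOperator γ (expectedReward P R) P π) Q)
    (hQ' : IsFixedPt (bellmanOperator γ (expectedReward P' R') P' π) Q') :
    ‖Q - Q'‖ ≤ Fintype.card X * δ * (1 - γ + γ * R₀) / (1 - γ) ^ 2 := by
  have hγ' : (0 : ℝ) < 1 - γ := sub_pos.2 hγ
  have hδ : 0 ≤ δ := (abs_nonneg _).trans
    (hPP' (Classical.arbitrary X) (Classical.arbitrary A) (Classical.arbitrary X))
  calc ‖Q - Q'‖ ≤ (‖expectedReward P R - expectedReward P' R'‖ +
          γ * (Fintype.card X * δ * (‖expectedReward P R‖ / (1 - γ)))) / (1 - γ) :=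
        norm_sub_le_of_isFixedPt_bellmanOperator hγ hP hP'
          (fun x a => sum_abs_le_card_mul (hPP' x a)) hπ hQ hQ'
    _ ≤ (Fintype.card X * δ + γ * (Fintype.card X * δ * (R₀ / (1 - γ)))) / (1 - γ) := by
        gcongr
        exact norm_expectedReward_sub_le hPR
    _ = Fintype.card X * δ * (1 - γ + γ * R₀) / (1 - γ) ^ 2 := by
        field_simp

theorem stmt_0_general (γ : ℝ) (hγ0 : 0 ≤ γ) (hγ1 : γ < 1)
    (P Pbar R Rbar : X → A → X → ℝ) (R0 : ℝ)
    (hP : ∀ x a, ∑ y, |P x a y| ≤ 1) (hPbar : ∀ x a, ∑ y, |Pbar x a y| ≤ 1)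
    (hR : ∀ x a, |∑ y, P x a y * R x a y| ≤ R0) (ε ε' : ℝ)
    (hε' : ε' = (1 - γ) ^ 2 * ε / ((Fintype.card X : ℝ) * (1 - γ + R0)))
    (hclose1 : ∀ x a y, |P x a y * R x a y - Pbar x a y * Rbar x a y| ≤ ε')
    (hclose2 : ∀ x a y, |P x a y - Pbar x a y| ≤ ε')
    (π : X → A → ℝ) (hπ : ∀ x, ∑ a, |π x a| ≤ 1) (Q Qbar : X → A → ℝ)
    (hQ : ∀ x a, Q x a = ∑ y, P x a y * (R x a y + γ * ∑ b, π y b * Q y b))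
    (hQbar : ∀ x a,
      Qbar x a = ∑ y, Pbar x a y * (Rbar x a y + γ * ∑ b, π y b * Qbar y b)) :
    ∀ x a, |Q x a - Qbar x a| ≤ ε := by
  intro x a
  lift γ to ℝ≥0 using hγ0
  have : Nonempty X := ⟨x⟩
  have : Nonempty A := ⟨a⟩
  have hR0 : 0 ≤ R0 := (abs_nonneg _).trans (hR x a)
  have hε'0 : 0 ≤ ε' := (abs_nonneg _).trans (hclose2 x a x)
  have hγ : (0 : ℝ) < 1 - γ := sub_pos.2 hγ1
  calc |Q x a - Qbar x a| ≤ ‖Q - Qbar‖ := abs_apply_le_norm (Q - Qbar) x a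
    _ ≤ Fintype.card X * ε' * (1 - γ + γ * R0) / (1 - γ) ^ 2 :=
        norm_sub_le_of_entrywise_close hγ1 hP hPbar hπ (norm_le_of_forall_abs_le hR) hclose1
          hclose2 (isFixedPt_bellmanOperator_of_bellman_equation hQ)
          (isFixedPt_bellmanOperator_of_bellman_equation hQbar)
    _ ≤ Fintype.card X * ε' * (1 - γ + R0) / (1 - γ) ^ 2 := by
        gcongr
        exact mul_le_of_le_one_left hR0 hγ1.le
    _ = ε := by
        rw [hε']
        field_simp

end Bellman

/-- Lemma (simulation): if the transition/reward parameters of two MDPs over the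
same state and action spaces are `ε'`-close, with
`ε' = (1-γ)² ε / (|X| (1-γ+R⁰))`, then for every stationary policy the value
functions of the two MDPs are `ε`-close. The value functions are characterized
as the (unique) solutions of the Bellman equations. -/
theorem stmt_0
    {X A : Type*} [Fintype X] [Nonempty X] [Fintype A] [Nonempty A]
    (γ : ℝ) (hγ0 : 0 ≤ γ) (hγ1 : γ < 1)
    (P Pbar R Rbar : X → A → X → ℝ) (R0 : ℝ)
    (hP0 : ∀ x a y, 0 ≤ P x a y) (hP1 : ∀ x a, ∑ y, P x a y = 1)
    (hPbar0 : ∀ x a y, 0 ≤ Pbar x a y) (hPbar1 : ∀ x a, ∑ y, Pbar x a y = 1)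
    (hR : ∀ x a y, 0 ≤ R x a y ∧ R x a y ≤ R0)
    (ε ε' : ℝ) (hε : 0 < ε)
    (hε' : ε' = (1 - γ) ^ 2 * ε / ((Fintype.card X : ℝ) * (1 - γ + R0)))
    (hclose1 : ∀ x a y, |P x a y * R x a y - Pbar x a y * Rbar x a y| ≤ ε')
    (hclose2 : ∀ x a y, |P x a y - Pbar x a y| ≤ ε')
    (π : X → A → ℝ) (hπ0 : ∀ x a, 0 ≤ π x a) (hπ1 : ∀ x, ∑ a, π x a = 1)
    (Q Qbar : X → A → ℝ)
    (hQ : ∀ x a, Q x a = ∑ y, P x a y * (R x a y + γ * ∑ b, π y b * Q y b))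
    (hQbar : ∀ x a,
      Qbar x a = ∑ y, Pbar x a y * (Rbar x a y + γ * ∑ b, π y b * Qbar y b)) :
    ∀ x a, |Q x a - Qbar x a| ≤ ε := by
  have hP x a := sum_abs_le_one_of_mem_stdSimplex ⟨hP0 x a, hP1 x a⟩
  have hPbar x a := sum_abs_le_one_of_mem_stdSimplex ⟨hPbar0 x a, hPbar1 x a⟩
  have hπ x := sum_abs_le_one_of_mem_stdSimplex ⟨hπ0 x, hπ1 x⟩
  have hR_norm x a : ‖R x a‖ ≤ R0 := (pi_norm_le_iff_of_nonempty _).2 fun y =>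
    (abs_of_nonneg (hR x a y).1).trans_le (hR x a y).2
  exact stmt_0_general γ hγ0 hγ1 P Pbar R Rbar R0 hP hPbar
    (fun x a => (abs_sum_mul_le_norm_of_sum_abs_le_one (hP x a) _).trans (hR_norm x a))
    ε ε' hε' hclose1 hclose2 π hπ Q Qbar hQ hQbar
end

section
/- Let X be a finite nonempty set, γ ∈ [0,1), ε ≥ 0, β ≥ 0, let N be a positive integer, let R_max > 0 and set V_max := R_max/(1−γ). Let p : X → ℝ satisfy p(y) ≥ 0 for all y and Σ_{y∈X} p(y) ≤ 1, let r : X → ℝ, let q ∈ ℝ, and let V*, V : X → ℝ satisfy V(y) ≥ V*(y) − ε for all y ∈ X. If Σ_{y∈X} p(y) ( r(y) + γ V*(y) ) ≥ q − β/√N and R_max/( N(1−γ) ) + (1−γ) ε ≥ β/√N, then Σ_{y∈X} p(y) ( r(y) + γ V(y) ) + V_max / N ≥ q − ε. -/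
/-!
A backup with subprobability weights is monotone and shrinks a constant shift `ε` of the value
function to at most `γ * ε`. Replacing `V*` by `V` therefore costs at most `γ * ε`, and the
exploration bonus together with the remaining slack `(1 - γ) * ε` pays for the sampling error.
-/

section BellmanBackup

variable {X R : Type*} [CommRing R] {s : Finset X} {p r V W : X → R} {γ ε : R}

/-- The Bellman backup `∑ p(y) (r(y) + γ V(y))` of a value function `V` at a fixed state-action
pair, for transitions into `s`. The weights `p` are not required to sum to one, so that
transitions outside `s` (here, to the garden-of-Eden state) may carry the missing mass. -/
def bellmanBackup (s : Finset X) (p r : X → R) (γ : R) (V : X → R) : R :=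
  ∑ y ∈ s, p y * (r y + γ * V y)

theorem bellmanBackup_sub_const :
    bellmanBackup s p r γ (fun y ↦ V y - ε) = bellmanBackup s p r γ V - γ * ε * ∑ y ∈ s, p y := by
  rw [bellmanBackup, bellmanBackup, Finset.mul_sum, ← Finset.sum_sub_distrib]
  exact Finset.sum_congr rfl fun y _ ↦ by ring

variable [PartialOrder R] [IsOrderedRing R]

theorem bellmanBackup_mono (hγ : 0 ≤ γ) (hp : ∀ y ∈ s, 0 ≤ p y) (hVW : ∀ y ∈ s, V y ≤ W y) :
    bellmanBackup s p r γ V ≤ bellmanBackup s p r γ W :=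
  Finset.sum_le_sum fun y hy ↦ mul_le_mul_of_nonneg_left
    (add_le_add_right (mul_le_mul_of_nonneg_left (hVW y hy) hγ) (r y)) (hp y hy)

theorem bellmanBackup_sub_le_bellmanBackup_sub_const
    (hγ : 0 ≤ γ) (hε : 0 ≤ ε) (hp : ∑ y ∈ s, p y ≤ 1) :
    bellmanBackup s p r γ V - γ * ε ≤ bellmanBackup s p r γ (fun y ↦ V y - ε) := by
  rw [bellmanBackup_sub_const]
  exact sub_le_sub_left (mul_le_of_le_one_right (mul_nonneg hγ hε) hp) _

theorem stmt_8_general {Vstar : X → R} {q bonus error : R} (hγ : 0 ≤ γ) (hε : 0 ≤ ε)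
    (hp0 : ∀ y ∈ s, 0 ≤ p y) (hp1 : ∑ y ∈ s, p y ≤ 1)
    (hV : ∀ y ∈ s, Vstar y - ε ≤ V y)
    (hq : q - error ≤ bellmanBackup s p r γ Vstar)
    (herror : error ≤ bonus + (1 - γ) * ε) :
    q - ε ≤ bellmanBackup s p r γ V + bonus :=
  calc
    q - ε = q - (bonus + (1 - γ) * ε) - γ * ε + bonus := by ring
    _ ≤ q - error - γ * ε + bonus := by gcongr
    _ ≤ bellmanBackup s p r γ Vstar - γ * ε + bonus := by gcongr
    _ ≤ bellmanBackup s p r γ (fun y ↦ Vstar y - ε) + bonus := by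
      gcongr
      exact bellmanBackup_sub_le_bellmanBackup_sub_const hγ hε hp1
    _ ≤ bellmanBackup s p r γ V + bonus := by
      gcongr
      exact bellmanBackup_mono hγ hp0 hV

end BellmanBackup

/-- Induction step in the proof that the optimistic initial model preserves
optimism under dynamic-programming updates. -/
theorem stmt_8
    {X : Type*} [Fintype X] [Nonempty X]
    (γ ε β : ℝ) (hγ0 : 0 ≤ γ) (hγ1 : γ < 1) (hε : 0 ≤ ε) (hβ : 0 ≤ β)
    (N : ℕ) (hN : 0 < N)
    (Rmax Vmax : ℝ) (hRmax : 0 < Rmax) (hVmax : Vmax = Rmax / (1 - γ))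
    (p : X → ℝ) (hp0 : ∀ y, 0 ≤ p y) (hp1 : ∑ y, p y ≤ 1)
    (r : X → ℝ) (q : ℝ) (Vstar V : X → ℝ)
    (hV : ∀ y, V y ≥ Vstar y - ε)
    (h1 : ∑ y, p y * (r y + γ * Vstar y) ≥ q - β / Real.sqrt N)
    (h2 : Rmax / (N * (1 - γ)) + (1 - γ) * ε ≥ β / Real.sqrt N) :
    ∑ y, p y * (r y + γ * V y) + Vmax / N ≥ q - ε := by
  refine stmt_8_general hγ0 hε (fun y _ ↦ hp0 y) hp1 (fun y _ ↦ hV y) h1 ?_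
  rwa [hVmax, div_div, mul_comm (1 - γ) (N : ℝ)]
end

section
/- Let M = (X, A, P, R, γ) and M̄ = (X, A, P̄, R̄, γ) be two finite MDPs over the same state set X, action set A and discount γ ∈ [0,1), both with rewards in [0, R⁰] (i.e., 0 ≤ R(x,a,y) ≤ R⁰ and 0 ≤ R̄(x,a,y) ≤ R⁰ for all (x,a,y)). Let K ⊆ X × A be a set of state–action pairs on which M and M̄ agree: P(x,a,y) = P̄(x,a,y) and R(x,a,y) = R̄(x,a,y) for all (x,a) ∈ K and y ∈ X. Fix a stationary policy π, a positive integer H, and (x,a) ∈ X × A, and let A_M ⊆ Ξ be the set of H-step trajectories from (x,a) that contain some state–action pair (x_t, a_t) ∉ K (for some 0 ≤ t ≤ H−1). Then Q^π_M(x,a,H) ≥ Q^π_M̄(x,a,H) − ( R⁰/(1−γ) ) · Pr^π_M(A_M), where Pr^π_M(A_M) := Σ_{ξ ∈ A_M} Pr^π_M(ξ). -/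
open Finset

/-- An `H`-step trajectory: states `x₀, …, x_H` and actions `a₀, …, a_{H-1}`. -/
abbrev Traj (X A : Type*) (H : ℕ) := (Fin (H + 1) → X) × (Fin H → A)

/-- Probability of an `H`-step trajectory under policy `π` in the MDP with
transition function `P`:
`(∏_{t=1}^{H-1} P(x_{t-1},a_{t-1},x_t) π(x_t,a_t)) · P(x_{H-1},a_{H-1},x_H)`,
i.e. `(∏_{t=0}^{H-1} P(x_t,a_t,x_{t+1})) · (∏_{t=1}^{H-1} π(x_t,a_t))`. -/
def trajProb {X A : Type*} [Fintype X] [Fintype A]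
    (P : X → A → X → ℝ) (π : X → A → ℝ) (H : ℕ) (ξ : Traj X A H) : ℝ :=
  (∏ t : Fin H, P (ξ.1 t.castSucc) (ξ.2 t) (ξ.1 t.succ)) *
    ∏ t ∈ univ.filter (fun t : Fin H => (t : ℕ) ≠ 0), π (ξ.1 t.castSucc) (ξ.2 t)

/-- Discounted total reward along an `H`-step trajectory:
`∑_{t=0}^{H-1} γ^t R(x_t,a_t,x_{t+1})`. -/
def trajReward {X A : Type*} [Fintype X] [Fintype A]
    (R : X → A → X → ℝ) (γ : ℝ) (H : ℕ) (ξ : Traj X A H) : ℝ :=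
  ∑ t : Fin H, γ ^ (t : ℕ) * R (ξ.1 t.castSucc) (ξ.2 t) (ξ.1 t.succ)

/-- The `H`-step value `Q^π_M(x,a,H)`: the sum, over all `H`-step trajectories
starting with `x₀ = x`, `a₀ = a`, of the trajectory probability times its
discounted reward. -/
def Qstep {X A : Type*} [Fintype X] [Fintype A] [DecidableEq X] [DecidableEq A]
    (P R : X → A → X → ℝ) (π : X → A → ℝ) (γ : ℝ) (H : ℕ) [NeZero H]
    (x : X) (a : A) : ℝ :=
  ∑ ξ ∈ univ.filter (fun ξ : Traj X A H => ξ.1 0 = x ∧ ξ.2 0 = a),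
    trajProb P π H ξ * trajReward R γ H ξ

/-!
Trajectories that stay in `K` have the same probability and the same reward in both MDPs, and both
probability measures have total mass `1`; hence the exit event has the same probability in both.
Off that event the two values agree. On it the value in `M` is nonnegative, while the value in `M̄`
is at most the maximal discounted reward times the common probability of exit.
-/

theorem sum_mul_sub_mul_sum_filter_le {ι 𝕜 : Type*} [CommRing 𝕜] [PartialOrder 𝕜]
    [IsOrderedRing 𝕜] {s : Finset ι} {B : ι → Prop} [DecidablePred B] {p q f g : ι → 𝕜} {C : 𝕜}
    (hp : ∀ i ∈ s, B i → 0 ≤ p i) (hq : ∀ i ∈ s, B i → 0 ≤ q i)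
    (hf : ∀ i ∈ s, B i → 0 ≤ f i) (hg : ∀ i ∈ s, B i → g i ≤ C)
    (hpq : ∀ i ∈ s, ¬B i → p i = q i) (hfg : ∀ i ∈ s, ¬B i → f i = g i)
    (hmass : ∑ i ∈ s, p i = ∑ i ∈ s, q i) :
    ∑ i ∈ s, q i * g i - C * ∑ i ∈ s with B i, p i ≤ ∑ i ∈ s, p i * f i := by
  have mass_off : ∑ i ∈ s with ¬B i, p i = ∑ i ∈ s with ¬B i, q i :=
    sum_congr rfl fun i hi => hpq i (mem_filter.1 hi).1 (mem_filter.1 hi).2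
  have mass_on : ∑ i ∈ s with B i, p i = ∑ i ∈ s with B i, q i := by
    rwa [← sum_filter_add_sum_filter_not s B p, ← sum_filter_add_sum_filter_not s B q, mass_off,
      add_left_inj] at hmass
  rw [sub_le_iff_le_add, mass_on, mul_sum, sum_filter, ← sum_add_distrib]
  refine sum_le_sum fun i hi => ?_
  split_ifs with hB
  · calc q i * g i ≤ q i * C := mul_le_mul_of_nonneg_left (hg i hi hB) (hq i hi hB)
      _ = C * q i := mul_comm _ _
      _ ≤ p i * f i + C * q i :=
        le_add_of_nonneg_left (mul_nonneg (hp i hi hB) (hf i hi hB))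
  · rw [hpq i hi hB, hfg i hi hB, add_zero]

theorem mul_geom_sum_le_div_one_sub {𝕜 : Type*} [Field 𝕜] [LinearOrder 𝕜] [IsStrictOrderedRing 𝕜]
    {c r : 𝕜} (hc : 0 ≤ c) (hr0 : 0 ≤ r) (hr1 : r < 1) (n : ℕ) :
    c * ∑ t ∈ range n, r ^ t ≤ c / (1 - r) := by
  have h : ∑ t ∈ range n, r ^ t ≤ 1 / (1 - r) := by
    simpa only [range_eq_Ico, pow_zero] using geom_sum_Ico_le_of_lt_one (m := 0) (n := n) hr0 hr1
  exact (mul_le_mul_of_nonneg_left h hc).trans_eq (mul_one_div c _)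

namespace Traj

variable {X A : Type*} {H : ℕ}

/-- The trajectory that follows `ξ`, then takes action `b` and moves to state `y`. -/
def snoc (ξ : Traj X A H) (b : A) (y : X) : Traj X A (H + 1) :=
  (Fin.snoc ξ.1 y, Fin.snoc ξ.2 b)

/-- A trajectory of `H + 1` steps is one of `H` steps followed by a last action and state. -/
def snocEquiv : Traj X A H × A × X ≃ Traj X A (H + 1) where
  toFun p := p.1.snoc p.2.1 p.2.2
  invFun ξ := ((Fin.init ξ.1, Fin.init ξ.2), ξ.2 (Fin.last H), ξ.1 (Fin.last (H + 1)))
  left_inv p := by simp [snoc]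
  right_inv ξ := by simp [snoc]

theorem sum_snoc [Fintype X] [Fintype A] {M : Type*} [AddCommMonoid M] (f : Traj X A (H + 1) → M) :
    ∑ ξ : Traj X A H, ∑ b, ∑ y, f (ξ.snoc b y) = ∑ ξ, f ξ := by
  calc ∑ ξ : Traj X A H, ∑ b, ∑ y, f (ξ.snoc b y)
      = ∑ ξ : Traj X A H, ∑ p : A × X, f (ξ.snoc p.1 p.2) :=
        sum_congr rfl fun ξ _ => (Fintype.sum_prod_type fun p : A × X => f (snoc ξ p.1 p.2)).symm
    _ = ∑ p : Traj X A H × A × X, f (snocEquiv p) :=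
        (Fintype.sum_prod_type fun p : Traj X A H × A × X => f (snocEquiv p)).symm
    _ = ∑ ξ, f ξ := snocEquiv.sum_comp f

end Traj

section Trajectories

variable {X A : Type*} [Fintype X] [Fintype A] {H : ℕ}

theorem trajProb_nonneg {P : X → A → X → ℝ} {π : X → A → ℝ} (hP : ∀ x a y, 0 ≤ P x a y)
    (hπ : ∀ x a, 0 ≤ π x a) (ξ : Traj X A H) : 0 ≤ trajProb P π H ξ :=
  mul_nonneg (prod_nonneg fun _ _ => hP _ _ _) (prod_nonneg fun _ _ => hπ _ _)

theorem trajProb_congr {P P' : X → A → X → ℝ} {ξ : Traj X A H}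
    (h : ∀ t : Fin H, P (ξ.1 t.castSucc) (ξ.2 t) (ξ.1 t.succ) =
      P' (ξ.1 t.castSucc) (ξ.2 t) (ξ.1 t.succ)) (π : X → A → ℝ) :
    trajProb P π H ξ = trajProb P' π H ξ := by
  simp only [trajProb, h]

theorem trajProb_snoc_of_length_zero (P : X → A → X → ℝ) (π : X → A → ℝ) (ξ : Traj X A 0) (b : A)
    (y : X) : trajProb P π 1 (ξ.snoc b y) = P (ξ.1 0) b y := by
  simp [trajProb, Traj.snoc, Fin.snoc]

theorem trajProb_snoc [NeZero H] (P : X → A → X → ℝ) (π : X → A → ℝ) (ξ : Traj X A H) (b : A)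
    (y : X) :
    trajProb P π (H + 1) (ξ.snoc b y) =
      trajProb P π H ξ * (π (ξ.1 (Fin.last H)) b * P (ξ.1 (Fin.last H)) b y) := by
  simp only [trajProb, Traj.snoc, prod_filter, Fin.prod_univ_castSucc, Fin.snoc_castSucc,
    Fin.snoc_last, Fin.succ_last, Fin.succ_castSucc, Fin.val_castSucc, Fin.val_last, NeZero.ne,
    ne_eq, not_false_eq_true, if_true]
  ring

theorem sum_trajProb_one [DecidableEq X] [DecidableEq A] {P : X → A → X → ℝ}
    (hP : ∀ x a, ∑ y, P x a y = 1) (π : X → A → ℝ) (x : X) (a : A) :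
    ∑ ξ : Traj X A 1 with ξ.1 0 = x ∧ ξ.2 0 = a, trajProb P π 1 ξ = 1 := by
  have sum_step (ξ : Traj X A 0) :
      ∑ b, ∑ y, (if ξ.1 0 = x ∧ b = a then P (ξ.1 0) b y else 0) = if ξ.1 0 = x then 1 else 0 := by
    by_cases hx : ξ.1 0 = x <;> simp [hx, hP]
  calc ∑ ξ : Traj X A 1 with ξ.1 0 = x ∧ ξ.2 0 = a, trajProb P π 1 ξ
      = ∑ ξ : Traj X A 0, ∑ b, ∑ y, if ξ.1 0 = x ∧ b = a then P (ξ.1 0) b y else 0 := by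
        simp only [sum_filter, ← Traj.sum_snoc (H := 0), trajProb_snoc_of_length_zero]
        simp only [Traj.snoc, Fin.snoc_apply_zero, Fin.snoc_zero]
    _ = ∑ ξ : Traj X A 0, if ξ.1 0 = x then 1 else 0 := sum_congr rfl fun ξ _ => sum_step ξ
    _ = ∑ y, if y = x then 1 else 0 :=
        ((Equiv.prodUnique _ _).trans (Equiv.funUnique (Fin 1) X)).sum_comp fun y =>
          if y = x then 1 else 0
    _ = 1 := Fintype.sum_ite_eq' x fun _ => 1

theorem sum_trajProb_succ [DecidableEq X] [DecidableEq A] [NeZero H] {P : X → A → X → ℝ}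
    {π : X → A → ℝ} (hP : ∀ x a, ∑ y, P x a y = 1) (hπ : ∀ x, ∑ a, π x a = 1) (x : X) (a : A) :
    ∑ ξ : Traj X A (H + 1) with ξ.1 0 = x ∧ ξ.2 0 = a, trajProb P π (H + 1) ξ =
      ∑ ξ : Traj X A H with ξ.1 0 = x ∧ ξ.2 0 = a, trajProb P π H ξ := by
  have last_step (ξ : Traj X A H) :
      ∑ b, ∑ y, trajProb P π (H + 1) (ξ.snoc b y) = trajProb P π H ξ := by
    simp only [trajProb_snoc, ← mul_sum, hP, mul_one, hπ]
  simp only [sum_filter, ← Traj.sum_snoc]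
  refine sum_congr rfl fun ξ _ => ?_
  rw [← last_step ξ]
  simp only [Traj.snoc, Fin.snoc_apply_zero]
  split_ifs <;> simp only [sum_const_zero]

theorem sum_trajProb_eq_one [DecidableEq X] [DecidableEq A] {P : X → A → X → ℝ} {π : X → A → ℝ}
    (hP : ∀ x a, ∑ y, P x a y = 1) (hπ : ∀ x, ∑ a, π x a = 1) (x : X) (a : A) :
    ∀ (H : ℕ) [NeZero H], ∑ ξ : Traj X A H with ξ.1 0 = x ∧ ξ.2 0 = a, trajProb P π H ξ = 1
  | 0, h => absurd rfl h.out
  | 1, _ => sum_trajProb_one hP π x a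
  | n + 2, _ => (sum_trajProb_succ hP hπ x a).trans (sum_trajProb_eq_one hP hπ x a (n + 1))

theorem trajReward_nonneg {R : X → A → X → ℝ} {γ : ℝ} (hγ : 0 ≤ γ) (hR : ∀ x a y, 0 ≤ R x a y)
    (ξ : Traj X A H) : 0 ≤ trajReward R γ H ξ :=
  sum_nonneg fun _ _ => mul_nonneg (pow_nonneg hγ _) (hR _ _ _)

theorem trajReward_le_mul_geom_sum {R : X → A → X → ℝ} {γ R0 : ℝ} (hγ : 0 ≤ γ)
    (hR : ∀ x a y, R x a y ≤ R0) (ξ : Traj X A H) :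
    trajReward R γ H ξ ≤ R0 * ∑ t ∈ range H, γ ^ t := by
  rw [mul_comm, sum_mul, ← Fin.sum_univ_eq_sum_range fun t => γ ^ t * R0]
  exact sum_le_sum fun _ _ => mul_le_mul_of_nonneg_left (hR _ _ _) (pow_nonneg hγ _)

theorem trajReward_congr {R R' : X → A → X → ℝ} {ξ : Traj X A H}
    (h : ∀ t : Fin H, R (ξ.1 t.castSucc) (ξ.2 t) (ξ.1 t.succ) =
      R' (ξ.1 t.castSucc) (ξ.2 t) (ξ.1 t.succ)) (γ : ℝ) :
    trajReward R γ H ξ = trajReward R' γ H ξ := by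
  simp only [trajReward, h]

end Trajectories

theorem stmt_9_general {X A : Type*} [Fintype X] [Fintype A] [DecidableEq X] [DecidableEq A]
    {γ : ℝ} (hγ : 0 ≤ γ) {P Pbar R Rbar : X → A → X → ℝ} {R0 : ℝ}
    (hP0 : ∀ x a y, 0 ≤ P x a y) (hP1 : ∀ x a, ∑ y, P x a y = 1)
    (hPbar0 : ∀ x a y, 0 ≤ Pbar x a y) (hPbar1 : ∀ x a, ∑ y, Pbar x a y = 1)
    (hR : ∀ x a y, 0 ≤ R x a y) (hRbar : ∀ x a y, Rbar x a y ≤ R0)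
    {K : Set (X × A)} [DecidablePred (· ∈ K)]
    (hKP : ∀ x a y, (x, a) ∈ K → P x a y = Pbar x a y)
    (hKR : ∀ x a y, (x, a) ∈ K → R x a y = Rbar x a y)
    {π : X → A → ℝ} (hπ0 : ∀ x a, 0 ≤ π x a) (hπ1 : ∀ x, ∑ a, π x a = 1)
    (H : ℕ) [NeZero H] (x : X) (a : A) :
    Qstep Pbar Rbar π γ H x a - (R0 * ∑ t ∈ range H, γ ^ t) *
        ∑ ξ : Traj X A H with (ξ.1 0 = x ∧ ξ.2 0 = a) ∧
          ∃ t : Fin H, (ξ.1 t.castSucc, ξ.2 t) ∉ K, trajProb P π H ξ ≤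
      Qstep P R π γ H x a := by
  have stays (ξ : Traj X A H) (hξ : ¬∃ t : Fin H, (ξ.1 t.castSucc, ξ.2 t) ∉ K) (t : Fin H) :
      (ξ.1 t.castSucc, ξ.2 t) ∈ K := not_not.1 (not_exists.1 hξ t)
  rw [← filter_filter]
  exact sum_mul_sub_mul_sum_filter_le
    (hp := fun ξ _ _ => trajProb_nonneg hP0 hπ0 ξ)
    (hq := fun ξ _ _ => trajProb_nonneg hPbar0 hπ0 ξ)
    (hf := fun ξ _ _ => trajReward_nonneg hγ hR ξ)
    (hg := fun ξ _ _ => trajReward_le_mul_geom_sum hγ hRbar ξ)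
    (hpq := fun ξ _ hξ => trajProb_congr (fun t => hKP _ _ _ (stays ξ hξ t)) π)
    (hfg := fun ξ _ hξ => trajReward_congr (fun t => hKR _ _ _ (stays ξ hξ t)) γ)
    (hmass := (sum_trajProb_eq_one hP1 hπ1 x a H).trans (sum_trajProb_eq_one hPbar1 hπ1 x a H).symm)

/-- Lemma (exploration event): if the MDPs `M` and `M̄` agree on a set `K` of
state–action pairs, then for any policy `π`, horizon `H` and start `(x,a)`,
`Q^π_M(x,a,H) ≥ Q^π_M̄(x,a,H) − (R⁰/(1−γ)) · Pr^π_M(A_M)`, where `A_M` is the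
event that the `H`-step trajectory (generated by `π` in `M` from `(x,a)`)
visits a state–action pair outside `K`. -/
theorem stmt_9
    {X A : Type*} [Fintype X] [Nonempty X] [Fintype A] [Nonempty A]
    [DecidableEq X] [DecidableEq A]
    (γ : ℝ) (hγ0 : 0 ≤ γ) (hγ1 : γ < 1)
    (P Pbar R Rbar : X → A → X → ℝ) (R0 : ℝ)
    (hP0 : ∀ x a y, 0 ≤ P x a y) (hP1 : ∀ x a, ∑ y, P x a y = 1)
    (hPbar0 : ∀ x a y, 0 ≤ Pbar x a y) (hPbar1 : ∀ x a, ∑ y, Pbar x a y = 1)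
    (hR : ∀ x a y, 0 ≤ R x a y ∧ R x a y ≤ R0)
    (hRbar : ∀ x a y, 0 ≤ Rbar x a y ∧ Rbar x a y ≤ R0)
    (K : Set (X × A)) [DecidablePred (· ∈ K)]
    (hKP : ∀ x a y, (x, a) ∈ K → P x a y = Pbar x a y)
    (hKR : ∀ x a y, (x, a) ∈ K → R x a y = Rbar x a y)
    (π : X → A → ℝ) (hπ0 : ∀ x a, 0 ≤ π x a) (hπ1 : ∀ x, ∑ a, π x a = 1)
    (H : ℕ) [NeZero H] (x : X) (a : A) :
    Qstep P R π γ H x a ≥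
      Qstep Pbar Rbar π γ H x a -
        R0 / (1 - γ) *
          ∑ ξ ∈ Finset.univ.filter (fun ξ : Traj X A H =>
              (ξ.1 0 = x ∧ ξ.2 0 = a) ∧
                ∃ t : Fin H, (ξ.1 t.castSucc, ξ.2 t) ∉ K),
            trajProb P π H ξ := by
  have hC := mul_geom_sum_le_div_one_sub ((hR x a x).1.trans (hR x a x).2) hγ0 hγ1 H
  exact (sub_le_sub_left (mul_le_mul_of_nonneg_right hC
    (sum_nonneg fun ξ _ => trajProb_nonneg hP0 hπ0 ξ)) _).trans <|
    stmt_9_general hγ0 hP0 hP1 hPbar0 hPbar1 (fun x a y => (hR x a y).1)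
      (fun x a y => (hRbar x a y).2) hKP hKR hπ0 hπ1 H x a
end
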